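/- Let Φ and Y be N×m real matrices such that YᵀΦ is invertible. Then ΦᵀYYᵀΦ is invertible and the oblique projection along Y coincides with the YYᵀ-orthogonal projection onto the column space of Φ: Φ(YᵀΦ)⁻¹Yᵀ = Φ(ΦᵀYYᵀΦ)⁻¹ΦᵀYYᵀ. (Applied with Y = LᵀΞΦ, this shows the TD solution is the orthogonal projection of v* induced by the seminorm given by Q_TD = LᵀΞΦΦᵀΞL.) -/

import Mathlib

open Matrix

/-!
The oblique projection `Φ (Z Φ)⁻¹ Z` depends on `Z` only through its row space, so `Z` may be
multiplied on the left by any invertible matrix. The two sides of the identity are the projections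
for `Z = Yᵀ` and `Z = (Φᵀ Y) Yᵀ`, and `Φᵀ Y` is the transpose of the invertible matrix `Yᵀ Φ`.
-/

section ObliqueProjection

variable {R m n : Type*} [CommRing R] [Fintype m] [DecidableEq m] [Fintype n]

/-- The matrix of the oblique projection onto the column space of `Φ` along the kernel of `Z`.
It has this meaning only when `Z * Φ` is invertible; otherwise `(Z * Φ)⁻¹ = 0`. -/
noncomputable def obliqueProjection (Φ : Matrix n m R) (Z : Matrix m n R) : Matrix n n R :=
  Φ * (Z * Φ)⁻¹ * Z

theorem obliqueProjection_mul_left_of_isUnit (Φ : Matrix n m R) (Z : Matrix m n R)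
    {A : Matrix m m R} (hA : IsUnit A) :
    obliqueProjection Φ (A * Z) = obliqueProjection Φ Z := by
  have hA_det : IsUnit A.det := (isUnit_iff_isUnit_det A).mp hA
  calc Φ * (A * Z * Φ)⁻¹ * (A * Z)
      = Φ * (Z * Φ)⁻¹ * (A⁻¹ * (A * Z)) := by
        rw [Matrix.mul_assoc A, Matrix.mul_inv_rev]
        simp only [Matrix.mul_assoc]
    _ = Φ * (Z * Φ)⁻¹ * Z := by rw [nonsing_inv_mul_cancel_left A Z hA_det]

theorem isUnit_transpose_mul_comm {Φ Y : Matrix n m R} :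
    IsUnit (Φᵀ * Y) ↔ IsUnit (Yᵀ * Φ) := by
  rw [← isUnit_transpose, transpose_mul, transpose_transpose]

theorem stmt_17_general (Φ Y : Matrix n m R) (hY : IsUnit (Yᵀ * Φ)) :
    IsUnit (Φᵀ * Y * Yᵀ * Φ) ∧
    Φ * (Yᵀ * Φ)⁻¹ * Yᵀ = Φ * (Φᵀ * Y * Yᵀ * Φ)⁻¹ * Φᵀ * Y * Yᵀ := by
  have hΦY : IsUnit (Φᵀ * Y) := isUnit_transpose_mul_comm.mpr hY
  constructor
  · rw [Matrix.mul_assoc (Φᵀ * Y)]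
    exact hΦY.mul hY
  · calc Φ * (Yᵀ * Φ)⁻¹ * Yᵀ
        = obliqueProjection Φ (Φᵀ * Y * Yᵀ) :=
          (obliqueProjection_mul_left_of_isUnit Φ Yᵀ hΦY).symm
      _ = Φ * (Φᵀ * Y * Yᵀ * Φ)⁻¹ * Φᵀ * Y * Yᵀ := by
          simp only [obliqueProjection, Matrix.mul_assoc]

end ObliqueProjection

theorem stmt_17 (N m : ℕ) (hm : 0 < m) (hmN : m ≤ N)
    (Φ Y : Matrix (Fin N) (Fin m) ℝ)
    (hY : IsUnit (Yᵀ * Φ)) :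
    IsUnit (Φᵀ * Y * Yᵀ * Φ) ∧
    Φ * (Yᵀ * Φ)⁻¹ * Yᵀ = Φ * (Φᵀ * Y * Yᵀ * Φ)⁻¹ * Φᵀ * Y * Yᵀ :=
  stmt_17_general Φ Y hY
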